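/- arXiv:2111.08850 — 2 statements merged into one kernel-verified Lean document; each statement's English description precedes it below -/
import Mathlib

section
/- Let 1 ≤ k ≤ n and let U = I₁ × ⋯ × Iₙ ⊆ ℝⁿ be an open box with 0 ∈ Iᵢ for i = 1,…,k. Let π: ℝⁿ → ℝ^{n−k} be the projection onto the last n−k coordinates, and for q = (q₁,…,q_n) ∈ U write q⁰ = (0,…,0,q_{k+1},…,q_n) ∈ U. Let g₁,…,g_m: U → ℝⁿ be smooth vector fields, and define Z̄ᵢ(q) = π(gᵢ(q⁰)) for q ∈ U, i = 1,…,m. Suppose that for each i = 1,…,m and every smooth vector field X: U → ℝⁿ with X(q) ∈ ℝᵏ×{0} for all q ∈ U, there exist a smooth vector field Y: U → ℝⁿ with Y(q) ∈ ℝᵏ×{0} for all q ∈ U and smooth functions c₁,…,c_m: U → ℝ such that [gᵢ, X] = Y + Σⱼ cⱼ gⱼ on U. Then there exist smooth functions λ_{ij}: U → ℝ (i,j = 1,…,m) such that π(gᵢ(q)) = Σⱼ λ_{ij}(q) Z̄ⱼ(q) for all q ∈ U and all i = 1,…,m. -/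
open Set VectorField

noncomputable section

abbrev PI : Type := Set.Icc (0:ℝ) 1

/-- pointwise application of a path of linear maps to a path of vectors -/
def papp (E G : Type) [NormedAddCommGroup E] [NormedSpace ℝ E] [NormedAddCommGroup G]
    [NormedSpace ℝ G] : C(PI, E →L[ℝ] G) →L[ℝ] C(PI, E) →L[ℝ] C(PI, G) :=
  LinearMap.mkContinuous₂
    (LinearMap.mk₂ ℝ (fun (b : C(PI, E →L[ℝ] G)) (f : C(PI, E)) => (⟨fun t => b t (f t), by fun_prop⟩ : C(PI, G)))
      (by intros; ext; simp) (by intros; ext; simp) (by intros; ext; simp) (by intros; ext; simp)) 1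
    (by
      intro b f
      refine (ContinuousMap.norm_le _ (by positivity)).2 fun t => ?_
      simp only [LinearMap.mk₂_apply, ContinuousMap.coe_mk, one_mul]
      refine ((b t).le_opNorm _).trans ?_
      gcongr
      · exact b.norm_coe_le_norm t
      · exact f.norm_coe_le_norm t)

@[simp] lemma papp_apply {E G : Type} [NormedAddCommGroup E] [NormedSpace ℝ E]
    [NormedAddCommGroup G] [NormedSpace ℝ G] (b : C(PI, E →L[ℝ] G)) (f : C(PI, E)) (t : PI) :
    papp E G b f t = b t (f t) := rfl

lemma papp_contDiff (E G : Type) [NormedAddCommGroup E] [NormedSpace ℝ E]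
    [NormedAddCommGroup G] [NormedSpace ℝ G] (n : WithTop ℕ∞) :
    ContDiff ℝ n (fun b : C(PI, E →L[ℝ] G) => papp E G b) :=
  ContinuousLinearMap.contDiff (𝕜 := ℝ) (E := C(PI, E →L[ℝ] G)) (F := C(PI, E) →L[ℝ] C(PI, G))
    (papp E G)

open Classical in
/-- Postcomposition with a map continuous along the path. -/
def pcomp {E G : Type} [NormedAddCommGroup E] [NormedAddCommGroup G] (h : E → G)
    (f : C(PI, E)) : C(PI, G) :=
  if H : Continuous (fun t => h (f t)) then ⟨fun t => h (f t), H⟩ else 0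

lemma pcomp_apply {E G : Type} [NormedAddCommGroup E] [NormedAddCommGroup G] {h : E → G}
    {U : Set E} (hh : ContinuousOn h U) {f : C(PI, E)} (hf : ∀ t, f t ∈ U) (t : PI) :
    pcomp h f t = h (f t) := by
  have H : Continuous (fun t => h (f t)) := hh.comp_continuous f.continuous hf
  simp [pcomp, H]

lemma isOpen_paths {E : Type} [NormedAddCommGroup E] {U : Set E} (hU : IsOpen U) :
    IsOpen {f : C(PI, E) | ∀ t, f t ∈ U} := by
  have := ContinuousMap.isOpen_setOfPred_mapsTo (X := PI) (K := univ) isCompact_univ hU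
  simpa [MapsTo] using this

lemma unif {E G : Type} [NormedAddCommGroup E] [NormedAddCommGroup G] {h : E → G}
    {U : Set E} (hU : IsOpen U) (hh : ContinuousOn h U) (f : C(PI, E)) (hf : ∀ t, f t ∈ U)
    {ε : ℝ} (hε : 0 < ε) :
    ∃ δ > 0, ∀ t : PI, ∀ y, ‖y - f t‖ < δ → y ∈ U ∧ ‖h y - h (f t)‖ < ε := by
  have hK : IsCompact (range f) := isCompact_range f.continuous
  have hsub : range f ⊆ U := by rintro _ ⟨t, rfl⟩; exact hf t
  have h1 := hK.uniformContinuousAt_of_continuousAt h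
    (fun a ha => hh.continuousAt (hU.mem_nhds (hsub ha))) (Metric.dist_mem_uniformity hε)
  obtain ⟨δ, hδ, h1⟩ := Metric.mem_uniformity_dist.1 h1
  obtain ⟨δ', hδ', h2⟩ := hK.exists_thickening_subset_open hU hsub
  refine ⟨min δ δ', lt_min hδ hδ', fun t y hy => ⟨h2 ?_, ?_⟩⟩
  · refine Metric.mem_thickening_iff.2 ⟨f t, mem_range_self t, ?_⟩
    rw [dist_eq_norm]; exact hy.trans_le (min_le_right _ _)
  · have := h1 (a := f t) (b := y)
      (by rw [dist_comm, dist_eq_norm]; exact hy.trans_le (min_le_left _ _)) (mem_range_self t)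
    rw [← dist_eq_norm, dist_comm]; exact this

lemma pcomp_continuousOn {E G : Type} [NormedAddCommGroup E] [NormedAddCommGroup G] {h : E → G}
    {U : Set E} (hU : IsOpen U) (hh : ContinuousOn h U) :
    ContinuousOn (pcomp h) {f : C(PI, E) | ∀ t, f t ∈ U} := by
  intro f hf
  refine ContinuousAt.continuousWithinAt ?_
  rw [Metric.continuousAt_iff]
  intro ε hε
  obtain ⟨δ, hδ, H⟩ := unif hU hh f hf (half_pos hε)
  refine ⟨δ, hδ, fun {k} hk => ?_⟩
  have hk' : ∀ t, ‖k t - f t‖ < δ := fun t => by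
    rw [← dist_eq_norm]; exact (ContinuousMap.dist_apply_le_dist t).trans_lt hk
  refine lt_of_le_of_lt ((ContinuousMap.dist_le (half_pos hε).le).2 fun t => ?_) (half_lt_self hε)
  rw [pcomp_apply hh (fun t => (H t _ (hk' t)).1), pcomp_apply hh hf, dist_eq_norm]
  exact (H t _ (hk' t)).2.le

lemma pcomp_hasFDerivAt {E G : Type} [NormedAddCommGroup E] [NormedSpace ℝ E]
    [NormedAddCommGroup G] [NormedSpace ℝ G] {h : E → G}
    {U : Set E} (hU : IsOpen U) (hh : DifferentiableOn ℝ h U) (hh' : ContinuousOn (fderiv ℝ h) U)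
    {f : C(PI, E)} (hf : ∀ t, f t ∈ U) :
    HasFDerivAt (pcomp h) (papp E G (pcomp (fderiv ℝ h) f)) f := by
  rw [hasFDerivAt_iff_isLittleO, Asymptotics.isLittleO_iff]
  intro ε hε
  obtain ⟨δ, hδ, H⟩ := unif hU hh' f hf hε
  filter_upwards [Metric.ball_mem_nhds f hδ] with k hk
  have hk' : ∀ t, ‖k t - f t‖ < δ := fun t => by
    rw [← dist_eq_norm]; exact (ContinuousMap.dist_apply_le_dist t).trans_lt hk
  refine (ContinuousMap.norm_le _ (by positivity)).2 fun t => ?_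
  simp only [ContinuousMap.sub_apply, papp_apply]
  rw [pcomp_apply hh.continuousOn (fun t => (H t _ (hk' t)).1), pcomp_apply hh.continuousOn hf,
    pcomp_apply hh' hf]
  have hb : ∀ x ∈ Metric.ball (f t) δ, x ∈ U ∧ ‖fderiv ℝ h x - fderiv ℝ h (f t)‖ < ε :=
    fun x hx => H t x (by rw [← dist_eq_norm]; exact hx)
  refine ((convex_ball (f t) δ).norm_image_sub_le_of_norm_fderiv_le' (𝕜 := ℝ) (f := h)
    (fun x hx => hh.differentiableAt (hU.mem_nhds (hb x hx).1)) (fun x hx => (hb x hx).2.le)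
    (Metric.mem_ball_self hδ) (by rw [Metric.mem_ball, dist_eq_norm]; exact hk' t)).trans ?_
  gcongr
  exact (k - f).norm_coe_le_norm t

lemma pcomp_contDiffOn_nat (n : ℕ) : ∀ {E G : Type} [NormedAddCommGroup E] [NormedSpace ℝ E]
    [NormedAddCommGroup G] [NormedSpace ℝ G] {h : E → G}
    {U : Set E} (_ : IsOpen U) (_ : ContDiffOn ℝ n h U),
    ContDiffOn ℝ n (pcomp h) {f : C(PI, E) | ∀ t, f t ∈ U} := by
  induction n with
  | zero =>
    intro E G _ _ _ _ h U hU hh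
    simp only [Nat.cast_zero, contDiffOn_zero] at hh ⊢
    exact pcomp_continuousOn hU hh
  | succ n ih =>
    intro E G _ _ _ _ h U hU hh
    simp only [Nat.cast_succ] at hh ⊢
    rw [contDiffOn_succ_iff_fderiv_of_isOpen hU] at hh
    rw [contDiffOn_succ_iff_fderiv_of_isOpen (isOpen_paths hU)]
    have key := fun f hf => pcomp_hasFDerivAt hU hh.1 hh.2.2.continuousOn (f := f) hf
    refine ⟨fun f hf => (key f hf).differentiableAt.differentiableWithinAt, by simp, ?_⟩
    have hc : ContDiff ℝ n (fun b => papp E G b) := papp_contDiff E G n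
    exact (hc.comp_contDiffOn (ih hU hh.2.2)).congr fun f hf => (key f hf).fderiv

/-- integration of a path -/
def pint (W : Type) [NormedAddCommGroup W] [NormedSpace ℝ W] : C(PI, W) →L[ℝ] C(PI, W) :=
  LinearMap.mkContinuous
    { toFun := fun f => ⟨fun t => ∫ s in (0:ℝ)..t, f (projIcc 0 1 zero_le_one s), by
        have : Continuous fun s => f (projIcc 0 1 zero_le_one s) := by fun_prop
        exact (intervalIntegral.continuous_primitive (fun a b => this.intervalIntegrable a b)
          0).comp continuous_subtype_val⟩
      map_add' := fun f g => by
        ext t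
        simp only [ContinuousMap.coe_mk, ContinuousMap.add_apply]
        exact intervalIntegral.integral_add (Continuous.intervalIntegrable (by fun_prop) _ _)
          (Continuous.intervalIntegrable (by fun_prop) _ _)
      map_smul' := fun c f => by
        ext t
        simp } 1 (by
    intro f
    refine (ContinuousMap.norm_le _ (by positivity)).2 fun t => ?_
    refine (intervalIntegral.norm_integral_le_of_norm_le_const (C := ‖f‖) fun s _ =>
      f.norm_coe_le_norm _).trans ?_
    have := t.2.1
    have := t.2.2
    rw [sub_zero, abs_of_nonneg t.2.1, mul_comm]
    gcongr)

lemma pint_apply {W : Type} [NormedAddCommGroup W] [NormedSpace ℝ W] (f : C(PI, W)) (t : PI) :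
    pint W f t = ∫ s in (0:ℝ)..t, f (projIcc 0 1 zero_le_one s) := rfl

/-- Volterra operator -/
def volt {W : Type} [NormedAddCommGroup W] [NormedSpace ℝ W] (b : C(PI, W →L[ℝ] W)) :
    C(PI, W) →L[ℝ] C(PI, W) := (pint W).comp (papp W W b)

lemma volt_apply {W : Type} [NormedAddCommGroup W] [NormedSpace ℝ W] (b : C(PI, W →L[ℝ] W))
    (f : C(PI, W)) (t : PI) : volt b f t =
      ∫ s in (0:ℝ)..t, b (projIcc 0 1 zero_le_one s) (f (projIcc 0 1 zero_le_one s)) := rfl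

lemma volt_pow_le {W : Type} [NormedAddCommGroup W] [NormedSpace ℝ W] (b : C(PI, W →L[ℝ] W))
    (f : C(PI, W)) (n : ℕ) (t : PI) :
    ‖(volt b ^ n) f t‖ ≤ (‖b‖ ^ n * ‖f‖ / n.factorial) * (t:ℝ) ^ n := by
  induction n generalizing t with
  | zero => simpa using f.norm_coe_le_norm t
  | succ n ih =>
    rw [pow_succ', mul_apply_eq_comp, volt_apply]
    refine (intervalIntegral.norm_integral_le_of_norm_le (μ := MeasureTheory.volume)
      (g := fun s => ‖b‖ * ((‖b‖ ^ n * ‖f‖ / n.factorial) * s ^ n)) t.2.1 ?_ ?_).trans ?_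
    · refine Filter.Eventually.of_forall fun s hs => ?_
      have hs' : s ∈ Icc (0:ℝ) 1 := ⟨hs.1.le, hs.2.trans t.2.2⟩
      rw [projIcc_of_mem _ hs']
      refine ((b _).le_opNorm _).trans ?_
      gcongr
      · exact b.norm_coe_le_norm _
      · exact ih ⟨s, hs'⟩
    · exact Continuous.intervalIntegrable (by fun_prop) _ _
    · apply le_of_eq
      simp only [intervalIntegral.integral_const_mul, integral_pow, Nat.factorial_succ]
      push_cast
      field_simp
      ring

lemma volt_isUnit {W : Type} [NormedAddCommGroup W] [NormedSpace ℝ W] [CompleteSpace W]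
    (b : C(PI, W →L[ℝ] W)) : IsUnit (1 - volt b) := by
  obtain ⟨n, hn⟩ := ((FloorSemiring.tendsto_pow_div_factorial_atTop ‖b‖).eventually
    (gt_mem_nhds (zero_lt_one' ℝ))).exists
  have h1 : ‖volt b ^ n‖ < 1 := by
    refine lt_of_le_of_lt (ContinuousLinearMap.opNorm_le_bound _ (by positivity) fun f => ?_) hn
    refine (ContinuousMap.norm_le _ (by positivity)).2 fun t => (volt_pow_le b f n t).trans ?_
    have : (t:ℝ) ^ n ≤ 1 := pow_le_one₀ t.2.1 t.2.2
    calc _ ≤ (‖b‖ ^ n * ‖f‖ / n.factorial) * 1 := by gcongr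
      _ = _ := by ring
  have h2 : IsUnit (1 - volt b ^ n) :=
    isUnit_one_sub_of_norm_lt_one (R := C(PI, W) →L[ℝ] C(PI, W)) h1
  rw [← mul_neg_geom_sum] at h2
  refine ((Commute.isUnit_mul_iff ?_).1 h2).1
  exact (mul_neg_geom_sum _ _).trans (geom_sum_mul_neg _ _).symm

/-- constant paths -/
def pconst (W : Type) [NormedAddCommGroup W] [NormedSpace ℝ W] : W →L[ℝ] C(PI, W) :=
  LinearMap.mkContinuous
    { toFun := fun w => ContinuousMap.const _ w
      map_add' := fun _ _ => rfl
      map_smul' := fun _ _ => rfl } 1 (by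
    intro w
    refine (ContinuousMap.norm_le _ (by positivity)).2 fun t => ?_
    rw [one_mul]
    exact le_rfl)

@[simp] lemma pconst_apply {W : Type} [NormedAddCommGroup W] [NormedSpace ℝ W] (w : W) (t : PI) :
    pconst W w t = w := rfl

/-- straight path from P q to q -/
def pline {E : Type} [NormedAddCommGroup E] [NormedSpace ℝ E] [FiniteDimensional ℝ E]
    (P : E →L[ℝ] E) : E →L[ℝ] C(PI, E) :=
  LinearMap.toContinuousLinearMap
    { toFun := fun q => ⟨fun t => P q + (t:ℝ) • (q - P q), by fun_prop⟩
      map_add' := fun x y => by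
        ext t
        simp only [map_add, ContinuousMap.coe_mk, ContinuousMap.add_apply]
        module
      map_smul' := fun c x => by
        ext t
        simp only [map_smul, ContinuousMap.coe_mk, ContinuousMap.smul_apply, RingHom.id_apply]
        module }

lemma pline_apply {E : Type} [NormedAddCommGroup E] [NormedSpace ℝ E] [FiniteDimensional ℝ E]
    (P : E →L[ℝ] E) (q : E) (t : PI) : pline P q t = P q + (t:ℝ) • (q - P q) := rfl

theorem core {E W : Type} [NormedAddCommGroup E] [NormedSpace ℝ E] [FiniteDimensional ℝ E]
    [NormedAddCommGroup W] [NormedSpace ℝ W] [CompleteSpace W]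
    {U : Set E} (hU : IsOpen U) (P : E →L[ℝ] E)
    (hP : ∀ q ∈ U, ∀ t ∈ Icc (0:ℝ) 1, P q + t • (q - P q) ∈ U)
    (B : E → E →L[ℝ] (W →L[ℝ] W)) (hB : ContDiffOn ℝ (⊤ : ℕ∞) B U) :
    ∃ lam : E → (W →L[ℝ] W), ContDiffOn ℝ (⊤ : ℕ∞) lam U ∧
      ∀ w : E → W, DifferentiableOn ℝ w U →
        (∀ q ∈ U, ∀ x, fderiv ℝ w q (x - P x) = B q (x - P x) (w q)) →
        ∀ q ∈ U, w q = lam q (w (P q)) := by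
  let b : E → C(PI, W →L[ℝ] W) := fun q =>
    papp E (W →L[ℝ] W) (pcomp B (pline P q)) (pconst E (q - P q))
  have hline : ∀ q ∈ U, ∀ t, pline P q t ∈ U := fun q hq t => hP q hq t t.2
  have hpc : ContDiffOn ℝ (⊤ : ℕ∞) (fun q => pcomp B (pline P q)) U := by
    have hl : ContDiff ℝ (⊤ : ℕ∞) (fun q => pline P q) := (pline P).contDiff
    refine ContDiffOn.comp (g := pcomp B) (t := {f : C(PI, E) | ∀ t, f t ∈ U}) ?_
      hl.contDiffOn hline
    exact contDiffOn_infty.2 fun n => pcomp_contDiffOn_nat n hU (contDiffOn_infty.1 hB n)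
  have hb : ContDiffOn ℝ (⊤ : ℕ∞) b U := by
    have hc : ContDiff ℝ (⊤ : ℕ∞) (fun b => papp E (W →L[ℝ] W) b) :=
      papp_contDiff E (W →L[ℝ] W) _
    have hc2 : ContDiff ℝ (⊤ : ℕ∞) (fun b => pconst E b) := (pconst E).contDiff
    refine (hc.comp_contDiffOn hpc).clm_apply ?_
    exact (hc2.comp (contDiff_id.sub P.contDiff)).contDiffOn
  have hv : ContDiffOn ℝ (⊤ : ℕ∞) (fun q => 1 - volt (b q)) U := by
    refine contDiffOn_const.sub ?_
    have hc : ContDiff ℝ (⊤ : ℕ∞) (fun b => papp W W b) := papp_contDiff W W _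
    exact contDiffOn_const.clm_comp (hc.comp_contDiffOn hb)
  have hinv : ContDiffOn ℝ (⊤ : ℕ∞) (fun q => Ring.inverse (1 - volt (b q))) U := by
    intro q hq
    obtain ⟨u, hu⟩ := volt_isUnit (b q)
    have := contDiffAt_ringInverse ℝ (n := (⊤ : ℕ∞)) (R := C(PI, W) →L[ℝ] C(PI, W)) u
    rw [hu] at this
    exact this.comp_contDiffWithinAt q (hv q hq)
  refine ⟨fun q => (ContinuousMap.evalCLM ℝ (1 : PI)).comp
    ((Ring.inverse (1 - volt (b q))).comp (pconst W)), ?_, ?_⟩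
  · exact contDiffOn_const.clm_comp (hinv.clm_comp contDiffOn_const)
  · intro w hw hd q hq
    let f : C(PI, W) := pcomp w (pline P q)
    have hf : ∀ t, f t = w (pline P q t) := fun t => pcomp_apply hw.continuousOn (hline q hq) t
    have key : (1 - volt (b q)) f = pconst W (w (P q)) := by
      ext1 t
      simp only [sub_apply, one_apply_eq_self,
        ContinuousMap.sub_apply, pconst_apply, volt_apply]
      have hpi : ∀ s ∈ uIcc (0:ℝ) t, s ∈ Icc (0:ℝ) 1 := fun s hs => by
        rw [uIcc_of_le t.2.1] at hs
        exact ⟨hs.1, hs.2.trans t.2.2⟩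
      rw [intervalIntegral.integral_eq_sub_of_hasDerivAt
        (f := fun s => w (P q + s • (q - P q)))]
      · rw [hf, pline_apply]; simp
      · intro s hs
        have hs' := hpi s hs
        have hm := hP q hq s hs'
        rw [projIcc_of_mem _ hs', hf]
        simp only [b, papp_apply, pconst_apply]
        rw [pcomp_apply hB.continuousOn (hline q hq), pline_apply]
        simp only
        rw [← hd _ hm]
        have h1 : HasDerivAt (fun s : ℝ => P q + s • (q - P q)) (q - P q) s := by
          simpa using ((hasDerivAt_id s).smul_const (q - P q)).const_add (P q)
        exact (hw.differentiableAt (hU.mem_nhds hm)).hasFDerivAt.comp_hasDerivAt s h1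
      · exact Continuous.intervalIntegrable (by fun_prop) _ _
    simp only [ContinuousLinearMap.comp_apply]
    rw [← key, ← mul_apply_eq_comp, Ring.inverse_mul_cancel _ (volt_isUnit _),
      one_apply_eq_self]
    change w q = f 1
    rw [hf, pline_apply]
    simp

end

lemma smul_const_smooth {E F : Type} [NormedAddCommGroup E] [NormedSpace ℝ E]
    [NormedAddCommGroup F] [NormedSpace ℝ F] {c : E → ℝ} {U : Set E}
    (hc : ContDiffOn ℝ (⊤ : ℕ∞) c U) (T : F) : ContDiffOn ℝ (⊤ : ℕ∞) (fun q => c q • T) U :=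
  hc.smul contDiffOn_const

theorem parallel_sections_span_projection
    (n k m : ℕ) (hk1 : 1 ≤ k) (hkn : k ≤ n)
    (I : Fin n → Set ℝ) (hIopen : ∀ i, IsOpen (I i)) (hIconv : ∀ i, Convex ℝ (I i))
    (hI0 : ∀ i : Fin n, (i : ℕ) < k → (0 : ℝ) ∈ I i)
    (U : Set (Fin n → ℝ)) (hU : U = Set.pi Set.univ I)
    (g : Fin m → (Fin n → ℝ) → (Fin n → ℝ))
    (hg : ∀ i, ContDiffOn ℝ (⊤ : ℕ∞) (g i) U)
    (π : (Fin n → ℝ) → (Fin (n - k) → ℝ))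
    (hπ : ∀ x j, π x j = x (Fin.cast (Nat.add_sub_cancel' hkn) (Fin.natAdd k j)))
    (proj0 : (Fin n → ℝ) → (Fin n → ℝ))
    (hproj0 : ∀ q i, proj0 q i = if (i : ℕ) < k then 0 else q i)
    (Z : Fin m → (Fin n → ℝ) → (Fin (n - k) → ℝ))
    (hZ : ∀ i q, Z i q = π (g i (proj0 q)))
    (hyp : ∀ i : Fin m, ∀ X : (Fin n → ℝ) → (Fin n → ℝ),
      ContDiffOn ℝ (⊤ : ℕ∞) X U → (∀ q ∈ U, ∀ j : Fin n, k ≤ (j : ℕ) → X q j = 0) →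
      ∃ (Y : (Fin n → ℝ) → (Fin n → ℝ)) (c : Fin m → (Fin n → ℝ) → ℝ),
        ContDiffOn ℝ (⊤ : ℕ∞) Y U ∧ (∀ q ∈ U, ∀ j : Fin n, k ≤ (j : ℕ) → Y q j = 0) ∧
        (∀ j, ContDiffOn ℝ (⊤ : ℕ∞) (c j) U) ∧
        ∀ q ∈ U, lieBracketWithin ℝ (g i) X U q = Y q + ∑ j, c j q • g j q) :
    ∃ lam : Fin m → Fin m → (Fin n → ℝ) → ℝ,
      (∀ i j, ContDiffOn ℝ (⊤ : ℕ∞) (lam i j) U) ∧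
      ∀ q ∈ U, ∀ i, π (g i q) = ∑ j, lam i j q • Z j q := by
  have hUo : IsOpen U := by
    rw [hU]; exact isOpen_set_pi finite_univ fun i _ => hIopen i
  have hUc : Convex ℝ U := by
    rw [hU]; exact convex_pi fun i _ => hIconv i
  let P : (Fin n → ℝ) →L[ℝ] (Fin n → ℝ) := LinearMap.toContinuousLinearMap
    { toFun := proj0
      map_add' := fun x y => by
        ext i; simp only [hproj0, Pi.add_apply]; split_ifs <;> simp
      map_smul' := fun c x => by
        ext i; simp only [hproj0, Pi.smul_apply, RingHom.id_apply]; split_ifs <;> simp }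
  have hPe : ∀ q, P q = proj0 q := fun q => rfl
  have hPU : ∀ q ∈ U, P q ∈ U := by
    intro q hq
    rw [hU] at hq ⊢
    intro i _
    rw [hPe, hproj0]
    split_ifs with h
    · exact hI0 i h
    · exact hq i trivial
  have hline : ∀ q ∈ U, ∀ t ∈ Icc (0:ℝ) 1, P q + t • (q - P q) ∈ U := fun q hq t ht =>
    hUc.add_smul_sub_mem (hPU q hq) hq ht
  -- the coefficients
  have hc : ∀ (l : Fin n) (i : Fin m), ∃ c : Fin m → (Fin n → ℝ) → ℝ,
      (∀ j, ContDiffOn ℝ (⊤ : ℕ∞) (c j) U) ∧ ((l : ℕ) < k → ∀ q ∈ U, ∀ p : Fin n, k ≤ (p : ℕ) →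
        fderiv ℝ (g i) q (Pi.single l 1) p = ∑ j, c j q * g j q p) := by
    intro l i
    by_cases hl : (l : ℕ) < k
    · obtain ⟨Y, c, -, hY, hc, h⟩ := hyp i (fun _ => Pi.single l 1) contDiffOn_const (by
        intro q _ j hj
        have : j ≠ l := by rintro rfl; omega
        simp [this])
      refine ⟨fun j q => - c j q, fun j => (hc j).neg, fun _ q hq p hp => ?_⟩
      have h1 := congrFun (h q hq) p
      rw [lieBracketWithin_of_isOpen hUo hq] at h1
      simp only [lieBracket, fderiv_fun_const, Pi.zero_apply, Pi.sub_apply, Pi.add_apply,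
        zero_apply, Finset.sum_apply, Pi.smul_apply, smul_eq_mul, hY q hq p hp] at h1
      simp only [neg_mul, Finset.sum_neg_distrib]
      linarith
    · exact ⟨fun _ _ => 0, fun _ => contDiffOn_const, fun h => absurd h hl⟩
  choose c hcs hce using hc
  let Eij : Fin m → Fin m → ((Fin m → ℝ) →L[ℝ] (Fin m → ℝ)) := fun i j =>
    (ContinuousLinearMap.proj (R := ℝ) (φ := fun _ : Fin m => ℝ) j).smulRight (Pi.single i (1:ℝ))
  let B : (Fin n → ℝ) → (Fin n → ℝ) →L[ℝ] ((Fin m → ℝ) →L[ℝ] (Fin m → ℝ)) := fun q =>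
    ∑ l, ∑ i, ∑ j, c l i j q •
      ((ContinuousLinearMap.proj (R := ℝ) (φ := fun _ : Fin n => ℝ) l).smulRight (Eij i j))
  have hB : ContDiffOn ℝ (⊤ : ℕ∞) B U :=
    ContDiffOn.sum fun l _ => ContDiffOn.sum fun i _ => ContDiffOn.sum fun j _ =>
      smul_const_smooth (hcs l i j) _
  have hBapp : ∀ q v w i, B q v w i = ∑ l, v l * ∑ j, c l i j q * w j := by
    intro q v w i
    simp only [B, Eij, Finset.sum_apply,
      ContinuousLinearMap.smulRight_apply, ContinuousLinearMap.proj_apply, Pi.smul_apply,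
      sum_apply, smul_apply, smul_eq_mul]
    refine Finset.sum_congr rfl fun l _ => ?_
    rw [Finset.sum_eq_single i]
    · rw [Finset.mul_sum]
      refine Finset.sum_congr rfl fun j _ => ?_
      simp
      ring
    · intro b _ hb
      simp [hb.symm]
    · simp
  obtain ⟨lam, hlam, hw⟩ := core hUo P hline B hB
  refine ⟨fun i j q => lam q (Pi.single j 1) i, fun i j => ?_, fun q hq i => ?_⟩
  · exact (contDiffOn_pi.1 (hlam.clm_apply contDiffOn_const)) i
  · ext p
    simp only [hZ, hπ, Finset.sum_apply, Pi.smul_apply, smul_eq_mul]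
    set p' : Fin n := Fin.cast (Nat.add_sub_cancel' hkn) (Fin.natAdd k p) with hp'
    have hkp : k ≤ (p' : ℕ) := by simp [hp']
    have hgd : ∀ i, ∀ q ∈ U, DifferentiableAt ℝ (g i) q := fun i q hq =>
      ((hg i).differentiableOn (by simp)).differentiableAt (hUo.mem_nhds hq)
    have hder : ∀ q ∈ U, HasFDerivAt (fun q => (fun i => g i q p' : Fin m → ℝ))
        (ContinuousLinearMap.pi fun i => (ContinuousLinearMap.proj (R := ℝ)
          (φ := fun _ : Fin n => ℝ) p').comp (fderiv ℝ (g i) q)) q := fun q hq =>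
      hasFDerivAt_pi.2 fun i => (ContinuousLinearMap.hasFDerivAt
          (ContinuousLinearMap.proj (R := ℝ) (φ := fun _ : Fin n => ℝ) p')).comp q
          (hgd i q hq).hasFDerivAt
    have := hw (fun q => (fun i => g i q p' : Fin m → ℝ))
      (fun q hq => (hder q hq).differentiableAt.differentiableWithinAt) ?_ q hq
    · have h2 := congrFun this i
      rw [h2]
      conv_lhs => rw [pi_eq_sum_univ' (fun i => g i (P q) p' : Fin m → ℝ)]
      rw [map_sum, Finset.sum_apply]
      refine Finset.sum_congr rfl fun j _ => ?_
      rw [map_smul]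
      simp [mul_comm, hPe]
    · intro q hq x
      rw [(hder q hq).fderiv]
      ext i
      rw [hBapp]
      simp only [ContinuousLinearMap.pi_apply, ContinuousLinearMap.comp_apply,
        ContinuousLinearMap.proj_apply]
      set v := x - P x with hv
      conv_lhs => rw [pi_eq_sum_univ' v]
      rw [map_sum, Finset.sum_apply]
      refine Finset.sum_congr rfl fun l _ => ?_
      rw [map_smul, Pi.smul_apply, smul_eq_mul]
      by_cases hl : (l : ℕ) < k
      · rw [hce l i hl q hq p' hkp]
      · have : v l = 0 := by simp [hv, hPe, hproj0, hl]
        simp [this]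
end

section
/- Let 1 ≤ k ≤ n, let U = I₁ × ⋯ × Iₙ ⊆ ℝⁿ be an open box with 0 ∈ Iᵢ for i = 1,…,k, and let m ≥ 1. Let Z₁,…,Z_m: U → ℝ^{n−k} be smooth maps each of which depends only on the coordinates x_{k+1},…,x_n, and let α_{ij}: U → ℝ (1 ≤ i ≤ k, 1 ≤ j ≤ m) be smooth functions satisfying Σ_{l=1}^m (∂α_{il}/∂x_j)(x) Z_l(x) = Σ_{l=1}^m (∂α_{jl}/∂x_i)(x) Z_l(x) for all x ∈ U and all 1 ≤ i, j ≤ k. Then there exist smooth functions β₁,…,β_m: U → ℝ such that Σ_{j=1}^m (∂β_j/∂x_i)(x) Z_j(x) = Σ_{j=1}^m α_{ij}(x) Z_j(x) for all x ∈ U and all 1 ≤ i ≤ k. -/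
open Set

section Helpers

open Topology MeasureTheory

universe u

theorem aux_hasFDerivAt_param {E F : Type u} [NormedAddCommGroup E] [NormedSpace ℝ E]
    [FiniteDimensional ℝ E] [NormedAddCommGroup F] [NormedSpace ℝ F]
    (U : Set E) (hU : IsOpen U) (W : Set (E × ℝ)) (hW : IsOpen W)
    (hUW : ∀ x ∈ U, ∀ t ∈ Icc (0 : ℝ) 1, (x, t) ∈ W)
    (f : E × ℝ → F) (hf : ContDiffOn ℝ 1 f W) (x : E) (hx : x ∈ U) :
    HasFDerivAt (fun y => ∫ t in (0 : ℝ)..1, f (y, t))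
      (∫ t in (0 : ℝ)..1, (fderiv ℝ f (x, t)).comp (ContinuousLinearMap.inl ℝ E ℝ)) x := by
  have : ProperSpace E := FiniteDimensional.proper ℝ E
  obtain ⟨r, hr, hball⟩ := Metric.nhds_basis_closedBall.mem_iff.1 (hU.mem_nhds hx)
  have hcd : ContinuousOn (fun p => (fderiv ℝ f p).comp (ContinuousLinearMap.inl ℝ E ℝ)) W := by
    have := hf.continuousOn_fderiv_of_isOpen hW le_rfl
    exact this.clm_comp continuousOn_const
  have hIoc : uIoc (0 : ℝ) 1 ⊆ Icc 0 1 := by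
    rw [uIoc_of_le zero_le_one]; exact Ioc_subset_Icc_self
  have hline : ∀ {G : Type u} [NormedAddCommGroup G] (g : E × ℝ → G), ContinuousOn g W →
      ∀ y ∈ U, ContinuousOn (fun t => g (y, t)) (Icc (0 : ℝ) 1) := by
    intro G _ g hg y hy
    exact hg.comp (by fun_prop) (fun t ht => hUW y hy t ht)
  have hK : IsCompact (Metric.closedBall x r ×ˢ Icc (0 : ℝ) 1) :=
    (isCompact_closedBall x r).prod isCompact_Icc
  have hKW : Metric.closedBall x r ×ˢ Icc (0 : ℝ) 1 ⊆ W := by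
    rintro ⟨y, t⟩ ⟨hy, ht⟩
    exact hUW y (hball hy) t ht
  obtain ⟨C, hC⟩ := hK.exists_bound_of_continuousOn (hcd.mono hKW)
  refine intervalIntegral.hasFDerivAt_integral_of_dominated_of_fderiv_le
    (F := fun y t => f (y, t))
    (F' := fun y t => (fderiv ℝ f (y, t)).comp (ContinuousLinearMap.inl ℝ E ℝ))
    (bound := fun _ => C)
    (Metric.closedBall_mem_nhds x hr) ?_ ?_ ?_ ?_ ?_ ?_
  · filter_upwards [hU.mem_nhds hx] with y hy
    exact ((hline f hf.continuousOn y hy).mono hIoc).aestronglyMeasurable measurableSet_uIoc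
  · apply ContinuousOn.intervalIntegrable
    rw [uIcc_of_le zero_le_one]
    exact hline f hf.continuousOn x hx
  · exact ((hline _ hcd x hx).mono hIoc).aestronglyMeasurable measurableSet_uIoc
  · refine Filter.Eventually.of_forall fun t ht y hy => ?_
    exact hC (y, t) ⟨hy, hIoc ht⟩
  · exact intervalIntegrable_const
  · refine Filter.Eventually.of_forall fun t ht y hy => ?_
    have hmem := hUW y (hball hy) t (hIoc ht)
    have h1 : HasFDerivAt f (fderiv ℝ f (y, t)) (y, t) :=
      ((hf.contDiffAt (hW.mem_nhds hmem)).differentiableAt one_ne_zero).hasFDerivAt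
    have h2 : HasFDerivAt (fun y : E => (y, t)) (ContinuousLinearMap.inl ℝ E ℝ) y :=
      hasFDerivAt_prodMk_left y t
    exact h1.comp y h2

theorem aux_contDiffOn_nat {E : Type u} [NormedAddCommGroup E] [NormedSpace ℝ E]
    [FiniteDimensional ℝ E]
    (U : Set E) (hU : IsOpen U) (W : Set (E × ℝ)) (hW : IsOpen W)
    (hUW : ∀ x ∈ U, ∀ t ∈ Icc (0 : ℝ) 1, (x, t) ∈ W) (N : ℕ) :
    ∀ {F : Type u} [NormedAddCommGroup F] [NormedSpace ℝ F]
    (f : E × ℝ → F) (_ : ContDiffOn ℝ (N + 1) f W),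
    ContDiffOn ℝ N (fun y => ∫ t in (0 : ℝ)..1, f (y, t)) U := by
  induction N with
  | zero =>
    intro F _ _ f hf
    have hf1 : ContDiffOn ℝ 1 f W := by simpa using hf
    have : ContinuousOn (fun y => ∫ t in (0 : ℝ)..1, f (y, t)) U := fun y hy =>
      (aux_hasFDerivAt_param U hU W hW hUW f hf1 y hy).continuousAt.continuousWithinAt
    simpa [contDiffOn_zero] using this
  | succ N ih =>
    intro F _ _ f hf
    have hf1 : ContDiffOn ℝ 1 f W := hf.of_le (by
      simp)
    have hd := aux_hasFDerivAt_param U hU W hW hUW f hf1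
    have h2 : ContDiffOn ℝ (N + 1)
        (fun p => (fderiv ℝ f p).comp (ContinuousLinearMap.inl ℝ E ℝ)) W := by
      have := hf.fderiv_of_isOpen (m := N + 1) hW (by push_cast; exact le_rfl)
      exact this.clm_comp contDiffOn_const
    have h3 := ih _ h2
    push_cast
    rw [contDiffOn_succ_iff_hasFDerivWithinAt_of_uniqueDiffOn hU.uniqueDiffOn]
    refine ⟨fun h => absurd h (by simp), _, h3, fun y hy => (hd y hy).hasFDerivWithinAt⟩

theorem aux_contDiffOn {E F : Type u} [NormedAddCommGroup E] [NormedSpace ℝ E]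
    [FiniteDimensional ℝ E] [NormedAddCommGroup F] [NormedSpace ℝ F]
    (U : Set E) (hU : IsOpen U) (W : Set (E × ℝ)) (hW : IsOpen W)
    (hUW : ∀ x ∈ U, ∀ t ∈ Icc (0 : ℝ) 1, (x, t) ∈ W)
    (f : E × ℝ → F) (hf : ContDiffOn ℝ (⊤ : ℕ∞) f W) :
    ContDiffOn ℝ (⊤ : ℕ∞) (fun y => ∫ t in (0 : ℝ)..1, f (y, t)) U := by
  rw [contDiffOn_infty]
  intro N
  refine aux_contDiffOn_nat U hU W hW hUW N f ?_
  have := (contDiffOn_infty.1 hf) (N + 1)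
  exact_mod_cast this

end Helpers


theorem exists_potential_for_compatible_coefficients
    (n k m : ℕ) (hk1 : 1 ≤ k) (hkn : k ≤ n) (hm : 1 ≤ m)
    (I : Fin n → Set ℝ) (hIopen : ∀ i, IsOpen (I i)) (hIconv : ∀ i, Convex ℝ (I i))
    (hI0 : ∀ i : Fin n, (i : ℕ) < k → (0 : ℝ) ∈ I i)
    (U : Set (Fin n → ℝ)) (hU : U = Set.pi Set.univ I)
    (Z : Fin m → (Fin n → ℝ) → (Fin (n - k) → ℝ))
    (hZsmooth : ∀ l, ContDiffOn ℝ (⊤ : ℕ∞) (Z l) U)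
    (hZdep : ∀ l, ∀ x ∈ U, ∀ y ∈ U, (∀ i : Fin n, k ≤ (i : ℕ) → x i = y i) → Z l x = Z l y)
    (α : Fin k → Fin m → (Fin n → ℝ) → ℝ)
    (hα : ∀ i l, ContDiffOn ℝ (⊤ : ℕ∞) (α i l) U)
    (hcompat : ∀ x ∈ U, ∀ i j : Fin k,
      ∑ l, (fderivWithin ℝ (α i l) U x (Pi.single (Fin.castLE hkn j) 1)) • Z l x =
      ∑ l, (fderivWithin ℝ (α j l) U x (Pi.single (Fin.castLE hkn i) 1)) • Z l x) :
    ∃ β : Fin m → (Fin n → ℝ) → ℝ,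
      (∀ j, ContDiffOn ℝ (⊤ : ℕ∞) (β j) U) ∧
      ∀ x ∈ U, ∀ i : Fin k,
        ∑ j, (fderivWithin ℝ (β j) U x (Pi.single (Fin.castLE hkn i) 1)) • Z j x =
        ∑ j, α i j x • Z j x := by
  have hUo : IsOpen U := by
    rw [hU]; exact isOpen_set_pi finite_univ fun i _ => hIopen i
  set c : Fin k → Fin n := Fin.castLE hkn with hc
  -- projection to the first k coordinates
  let P : (Fin n → ℝ) →L[ℝ] (Fin n → ℝ) :=
    ∑ j : Fin k, (ContinuousLinearMap.proj (R := ℝ) (φ := fun _ : Fin n => ℝ) (c j)).smulRight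
      (Pi.single (c j) (1 : ℝ))
  have hP : ∀ x, P x = ∑ j : Fin k, x (c j) • (Pi.single (c j) (1 : ℝ) : Fin n → ℝ) := by
    intro x; simp [P]
  have hcinj : Function.Injective c := Fin.castLE_injective hkn
  have hPlt : ∀ x (j : Fin k), P x (c j) = x (c j) := by
    intro x j
    rw [hP, Finset.sum_apply, Finset.sum_eq_single j]
    · simp
    · intro b _ hb
      have : c j ≠ c b := fun h => hb (hcinj h).symm
      simp [Pi.single_apply, this]
    · simp
  have hPge : ∀ x (i : Fin n), k ≤ (i : ℕ) → P x i = 0 := by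
    intro x i hi
    rw [hP, Finset.sum_apply]
    refine Finset.sum_eq_zero fun b _ => ?_
    have : i ≠ c b := by
      intro h; have := congrArg Fin.val h; simp [hc] at this; omega
    simp [Pi.single_apply, this]
  have hPsingle : ∀ i : Fin k, P (Pi.single (c i) 1) = Pi.single (c i) 1 := by
    intro i
    rw [hP, Finset.sum_eq_single i]
    · simp
    · intro b _ hb
      have : c b ≠ c i := fun h => hb (hcinj h)
      simp [Pi.single_apply, this]
    · simp
  let φ : (Fin n → ℝ) × ℝ → (Fin n → ℝ) := fun p => p.1 + (p.2 - 1) • P p.1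
  have hφs : ContDiff ℝ (⊤ : ℕ∞) φ := by
    have := P.contDiff (n := (⊤ : ℕ∞))
    fun_prop
  let W : Set ((Fin n → ℝ) × ℝ) := φ ⁻¹' U
  have hW : IsOpen W := hUo.preimage hφs.continuous
  have hUW : ∀ x ∈ U, ∀ t ∈ Icc (0 : ℝ) 1, (x, t) ∈ W := by
    intro x hx t ht
    change φ (x, t) ∈ U
    rw [hU] at hx ⊢
    intro i _
    by_cases hi : (i : ℕ) < k
    · have h1 : φ (x, t) i = t * x i := by
        have := hPlt x ⟨i, hi⟩
        have h2 : c ⟨i, hi⟩ = i := by ext; simp [hc]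
        rw [h2] at this
        simp [φ, this]; ring
      rw [h1]
      have := (hIconv i) (hI0 i hi) (hx i trivial) (sub_nonneg.2 ht.2) ht.1 (by ring)
      simpa using this
    · have h1 : φ (x, t) i = x i := by
        simp [φ, hPge x i (not_lt.1 hi)]
      rw [h1]; exact hx i trivial
  have hZφ : ∀ l, ∀ x ∈ U, ∀ t ∈ Icc (0 : ℝ) 1, Z l (φ (x, t)) = Z l x := by
    intro l x hx t ht
    refine hZdep l _ (hUW x hx t ht) _ hx fun i hi => ?_
    simp [φ, hPge x i hi]
  let f : Fin m → (Fin n → ℝ) × ℝ → ℝ := fun l p => ∑ j : Fin k, p.1 (c j) * α j l (φ p)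
  have hαφ : ∀ i l, ContDiffOn ℝ (⊤ : ℕ∞) (fun p => α i l (φ p)) W := fun i l =>
    (hα i l).comp hφs.contDiffOn (fun p hp => hp)
  have hf : ∀ l, ContDiffOn ℝ (⊤ : ℕ∞) (f l) W := by
    intro l
    refine ContDiffOn.sum fun j _ => ?_
    refine ContDiffOn.mul ?_ (hαφ j l)
    have : ContDiff ℝ (⊤ : ℕ∞) (fun p : (Fin n → ℝ) × ℝ => p.1 (c j)) := by fun_prop
    exact this.contDiffOn
  have hf1 : ∀ l, ContDiffOn ℝ 1 (f l) W := fun l => (hf l).of_le (by simp)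
  -- derivative of φ
  have hφd : ∀ x t, HasFDerivAt φ (fderiv ℝ φ (x, t)) (x, t) := fun x t =>
    ((hφs.contDiffAt).differentiableAt (by simp)).hasFDerivAt
  have hφx : ∀ x t (i : Fin k),
      HasDerivAt (fun s : ℝ => φ (x + s • Pi.single (c i) 1, t))
        (t • (Pi.single (c i) 1 : Fin n → ℝ)) 0 := by
    intro x t i
    have h0 : (fun s : ℝ => φ (x + s • Pi.single (c i) 1, t)) =
        fun s : ℝ => φ (x, t) + s • (t • (Pi.single (c i) 1 : Fin n → ℝ)) := by
      funext s
      simp only [φ, map_add, map_smul, hPsingle]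
      module
    rw [h0]
    simpa using ((hasDerivAt_id (0 : ℝ)).smul_const
      (t • (Pi.single (c i) 1 : Fin n → ℝ))).const_add (φ (x, t))
  have hφt : ∀ x t, HasDerivAt (fun s : ℝ => φ (x, s)) (P x) t := by
    intro x t
    simpa [φ] using (((hasDerivAt_id t).sub_const 1).smul_const (P x)).const_add x
  have hαd : ∀ i l, ∀ y ∈ U, HasFDerivAt (α i l) (fderivWithin ℝ (α i l) U y) y := by
    intro i l y hy
    rw [fderivWithin_of_isOpen hUo hy]
    exact (((hα i l).contDiffAt (hUo.mem_nhds hy)).differentiableAt (by simp)).hasFDerivAt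
  -- partial derivative of f
  have hfd : ∀ l, ∀ x ∈ U, ∀ t ∈ Icc (0 : ℝ) 1, ∀ i : Fin k,
      fderiv ℝ (f l) (x, t) (Pi.single (c i) 1, 0) =
        α i l (φ (x, t)) + ∑ j, x (c j) *
          (t * fderivWithin ℝ (α j l) U (φ (x, t)) (Pi.single (c i) 1)) := by
    intro l x hx t ht i
    have hmem := hUW x hx t ht
    have h1 : HasFDerivAt (f l) (fderiv ℝ (f l) (x, t)) (x, t) :=
      (((hf l).contDiffAt (hW.mem_nhds hmem)).differentiableAt (by simp)).hasFDerivAt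
    have hline : HasDerivAt (fun s : ℝ => ((x + s • Pi.single (c i) 1, t) : (Fin n → ℝ) × ℝ))
        (Pi.single (c i) 1, 0) 0 := by
      have := ((hasDerivAt_id (0 : ℝ)).smul_const (Pi.single (c i) 1 : Fin n → ℝ)).const_add x
      simpa using this.prodMk (hasDerivAt_const (0 : ℝ) t)
    have h2 : HasDerivAt (fun s : ℝ => f l (x + s • Pi.single (c i) 1, t))
        (fderiv ℝ (f l) (x, t) (Pi.single (c i) 1, 0)) 0 := by
      refine HasFDerivAt.comp_hasDerivAt (0 : ℝ) (l := f l) ?_ hline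
      simpa using h1
    have h3 : HasDerivAt (fun s : ℝ => f l (x + s • Pi.single (c i) 1, t))
        (∑ j, ((Pi.single (c i) 1 : Fin n → ℝ) (c j) * α j l (φ (x, t)) + x (c j) *
          (t * fderivWithin ℝ (α j l) U (φ (x, t)) (Pi.single (c i) 1)))) 0 := by
      refine HasDerivAt.fun_sum fun j _ => ?_
      have ha : HasDerivAt (fun s : ℝ => (x + s • (Pi.single (c i) 1 : Fin n → ℝ)) (c j))
          ((Pi.single (c i) 1 : Fin n → ℝ) (c j)) 0 := by
        simpa using ((hasDerivAt_id (0 : ℝ)).mul_const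
          ((Pi.single (c i) 1 : Fin n → ℝ) (c j))).const_add (x (c j))
      have hb : HasDerivAt (fun s : ℝ => α j l (φ (x + s • Pi.single (c i) 1, t)))
          (fderivWithin ℝ (α j l) U (φ (x, t)) (t • Pi.single (c i) 1)) 0 := by
        refine HasFDerivAt.comp_hasDerivAt (0 : ℝ) (l := α j l) ?_ (hφx x t i)
        simpa using hαd j l _ hmem
      have := ha.fun_mul hb
      simpa using this
    rw [h2.unique h3, Finset.sum_add_distrib]
    congr 1
    rw [Finset.sum_eq_single i]
    · simp
    · intro b _ hb
      have : c b ≠ c i := fun h => hb (hcinj h)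
      simp [Pi.single_apply, this]
    · simp
  refine ⟨fun l x => ∫ t in (0 : ℝ)..1, f l (x, t), fun l =>
    aux_contDiffOn U hUo W hW hUW (f l) (hf l), ?_⟩
  intro x hx i
  have hcont : ∀ l, ContinuousOn (fun t : ℝ =>
      (fderiv ℝ (f l) (x, t)).comp (ContinuousLinearMap.inl ℝ (Fin n → ℝ) ℝ)) (Icc 0 1) := by
    intro l
    have h := (hf1 l).continuousOn_fderiv_of_isOpen hW le_rfl
    exact (h.comp (f := fun t : ℝ => (x, t)) (by fun_prop) (fun t ht => hUW x hx t ht)).clm_comp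
      continuousOn_const
  have hint : ∀ l, IntervalIntegrable (fun t : ℝ =>
      (fderiv ℝ (f l) (x, t)).comp (ContinuousLinearMap.inl ℝ (Fin n → ℝ) ℝ))
      MeasureTheory.volume 0 1 := by
    intro l
    apply ContinuousOn.intervalIntegrable
    rw [uIcc_of_le zero_le_one]
    exact hcont l
  have hβ : ∀ l, fderivWithin ℝ (fun x => ∫ t in (0 : ℝ)..1, f l (x, t)) U x
      (Pi.single (c i) 1) = ∫ t in (0 : ℝ)..1, fderiv ℝ (f l) (x, t) (Pi.single (c i) 1, 0) := by
    intro l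
    rw [fderivWithin_of_isOpen hUo hx,
      (aux_hasFDerivAt_param U hUo W hW hUW (f l) (hf1 l) x hx).fderiv,
      ContinuousLinearMap.intervalIntegral_apply (hint l)]
    simp
  have hint2 : ∀ l, IntervalIntegrable (fun t : ℝ => 
      fderiv ℝ (f l) (x, t) (Pi.single (c i) 1, 0) • Z l x) MeasureTheory.volume 0 1 := by
    intro l
    apply ContinuousOn.intervalIntegrable
    rw [uIcc_of_le zero_le_one]
    have := (hcont l).clm_apply (continuousOn_const (c := (Pi.single (c i) 1 : Fin n → ℝ)))
    refine ContinuousOn.fun_smul ?_ continuousOn_const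
    simpa using this
  have hFTC : ∀ t ∈ Icc (0 : ℝ) 1, HasDerivAt
      (fun t : ℝ => ∑ l, (t * α i l (φ (x, t))) • Z l x)
      (∑ l, fderiv ℝ (f l) (x, t) (Pi.single (c i) 1, 0) • Z l x) t := by
    intro t ht
    have hmem := hUW x hx t ht
    have h1 : HasDerivAt (fun t : ℝ => ∑ l, (t * α i l (φ (x, t))) • Z l x)
        (∑ l, (α i l (φ (x, t)) +
          t * fderivWithin ℝ (α i l) U (φ (x, t)) (P x)) • Z l x) t := by
      refine HasDerivAt.fun_sum fun l _ => ?_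
      refine HasDerivAt.smul_const ?_ _
      have hb : HasDerivAt (fun s : ℝ => α i l (φ (x, s)))
          (fderivWithin ℝ (α i l) U (φ (x, t)) (P x)) t :=
        HasFDerivAt.comp_hasDerivAt t (l := α i l) (hαd i l _ hmem) (hφt x t)
      simpa using (hasDerivAt_id' t).fun_mul hb
    convert h1 using 1
    have h4 : ∀ j : Fin k,
        ∑ l, fderivWithin ℝ (α j l) U (φ (x, t)) (Pi.single (c i) 1) • Z l x =
        ∑ l, fderivWithin ℝ (α i l) U (φ (x, t)) (Pi.single (c j) 1) • Z l x := by
      intro j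
      have := hcompat (φ (x, t)) hmem j i
      simpa only [hZφ _ x hx t ht] using this
    calc ∑ l, fderiv ℝ (f l) (x, t) (Pi.single (c i) 1, 0) • Z l x
        = ∑ l, α i l (φ (x, t)) • Z l x + ∑ j, (x (c j) * t) •
            ∑ l, fderivWithin ℝ (α j l) U (φ (x, t)) (Pi.single (c i) 1) • Z l x := by
          simp only [Finset.smul_sum]
          rw [Finset.sum_comm, ← Finset.sum_add_distrib]
          refine Finset.sum_congr rfl fun l _ => ?_
          rw [hfd l x hx t ht i, add_smul, Finset.sum_smul]
          simp only [smul_smul, mul_assoc]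
      _ = ∑ l, α i l (φ (x, t)) • Z l x + ∑ j, (x (c j) * t) •
            ∑ l, fderivWithin ℝ (α i l) U (φ (x, t)) (Pi.single (c j) 1) • Z l x := by
          simp only [h4]
      _ = _ := by
          simp only [Finset.smul_sum]
          rw [Finset.sum_comm, ← Finset.sum_add_distrib]
          refine Finset.sum_congr rfl fun l _ => ?_
          rw [hP, map_sum, add_smul, Finset.mul_sum, Finset.sum_smul]
          simp only [map_smul, smul_smul, smul_eq_mul]
          congr 1
          refine Finset.sum_congr rfl fun j _ => ?_
          congr 1; ring
  have hφ1 : φ (x, 1) = x := by simp [φ]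
  calc ∑ l, (fderivWithin ℝ (fun x => ∫ t in (0 : ℝ)..1, f l (x, t)) U x
      (Pi.single (c i) 1)) • Z l x
      = ∫ t in (0 : ℝ)..1, ∑ l, fderiv ℝ (f l) (x, t) (Pi.single (c i) 1, 0) • Z l x := by
        rw [intervalIntegral.integral_finsetSum fun l _ => hint2 l]
        refine Finset.sum_congr rfl fun l _ => ?_
        rw [hβ l, intervalIntegral.integral_smul_const]
    _ = ∑ l, α i l x • Z l x := by
        rw [intervalIntegral.integral_eq_sub_of_hasDerivAt
          (f := fun t : ℝ => ∑ l, (t * α i l (φ (x, t))) • Z l x)]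
        · simp [hφ1]
        · intro t ht
          rw [uIcc_of_le zero_le_one] at ht
          exact hFTC t ht
        · have := IntervalIntegrable.sum (μ := MeasureTheory.volume) (a := 0) (b := 1)
            Finset.univ (f := fun l (t : ℝ) => 
              fderiv ℝ (f l) (x, t) (Pi.single (c i) 1, 0) • Z l x) (fun l _ => hint2 l)
          have he : (fun t : ℝ => ∑ l, fderiv ℝ (f l) (x, t) (Pi.single (c i) 1, 0) • Z l x) =
              ∑ l, fun t : ℝ => fderiv ℝ (f l) (x, t) (Pi.single (c i) 1, 0) • Z l x := by
            funext t
            simp only [Finset.sum_apply]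
          rw [he]
          exact this
end
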